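/- arXiv:2510.22757 — 2 statements merged into one kernel-verified Lean document; each statement's English description precedes it below -/
import Mathlib

section
/- (Theorem 1, objective-gap bound with tuned step size.) Let Θ be a nonempty type, F, J : Θ → ℝ, ε ≥ 0, J̄ ≥ 0 with max{ε, J̄} > 0, μ₁ > 0 and K ≥ 1. Set η = μ₁/(√K · max{ε, J̄}). Let μ₁, …, μ_{K+1} ∈ ℝ and θ₁, …, θ_K ∈ Θ satisfy: for each k, θₖ maximizes the Lagrangian with multiplier μₖ, 0 ≤ J(θₖ) ≤ J̄, and μₖ₊₁ = max(μₖ − η(ε − J(θₖ)), 0). Let θ* ∈ Θ satisfy J(θ*) ≤ ε. Then (1/K)·Σ_{k=1}^{K} (F(θ*) − F(θₖ)) ≤ (3/2)·max{ε, J̄}·μ₁/√K. -/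
/-!
Write `g k = ε - J (θ k)`. Testing the maximality of `θ k` against the feasible point `θstar` gives
`F θstar - F (θ k) ≤ μ k * g k`, because `μ k ≥ 0`. The multipliers are the iterates of projected
gradient descent on the half-line with gradients `g k`, so the standard regret bound against the
comparator `0` controls `∑ k, μ k * g k` by `μ 1 ^ 2 / (2 * η) + η / 2 * ∑ k, g k ^ 2`. The chosen
step size balances these two terms.
-/

theorem sq_max_zero_sub_le_sq_sub (a : ℝ) {u : ℝ} (hu : 0 ≤ u) :
    (max a 0 - u) ^ 2 ≤ (a - u) ^ 2 := by
  have h : |max a 0 - max u 0| ≤ |a - u| := abs_max_sub_max_le_abs a u 0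
  rwa [max_eq_left hu, ← sq_le_sq] at h

theorem projected_step_regret_le (η x g : ℝ) {u : ℝ} (hu : 0 ≤ u) :
    2 * η * ((x - u) * g) ≤
      (x - u) ^ 2 - (max (x - η * g) 0 - u) ^ 2 + η ^ 2 * g ^ 2 := by
  linarith [sq_max_zero_sub_le_sq_sub (x - η * g) hu]

section ProjectedDescent

variable {K : ℕ} {η : ℝ} {x g : ℕ → ℝ}

theorem projected_descent_nonneg (hx₁ : 0 ≤ x 1)
    (hupd : ∀ k, 1 ≤ k → k ≤ K → x (k + 1) = max (x k - η * g k) 0)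
    {k : ℕ} (hk : 1 ≤ k) (hkK : k ≤ K + 1) : 0 ≤ x k := by
  cases k, hk using Nat.le_induction with
  | base => exact hx₁
  | succ j hj =>
    rw [hupd j hj (Nat.le_of_succ_le_succ hkK)]
    exact le_max_right _ _

theorem projected_descent_regret_le (hη : 0 < η)
    (hupd : ∀ k, 1 ≤ k → k ≤ K → x (k + 1) = max (x k - η * g k) 0) {u : ℝ} (hu : 0 ≤ u) :
    ∑ k ∈ Finset.Icc 1 K, (x k - u) * g k ≤
      (x 1 - u) ^ 2 / (2 * η) + η / 2 * ∑ k ∈ Finset.Icc 1 K, g k ^ 2 := by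
  have telescope : ∑ k ∈ Finset.Icc 1 K, ((x k - u) ^ 2 - (x (k + 1) - u) ^ 2) =
      (x 1 - u) ^ 2 - (x (K + 1) - u) ^ 2 := by
    rw [← Finset.Ico_add_one_right_eq_Icc]
    simpa only [neg_sub_neg] using
      Finset.sum_Ico_sub (f := fun k ↦ -(x k - u) ^ 2) (Nat.le_add_left 1 K)
  have scaled : 2 * η * ∑ k ∈ Finset.Icc 1 K, (x k - u) * g k ≤
      (x 1 - u) ^ 2 + η ^ 2 * ∑ k ∈ Finset.Icc 1 K, g k ^ 2 :=
    calc 2 * η * ∑ k ∈ Finset.Icc 1 K, (x k - u) * g k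
      _ ≤ ∑ k ∈ Finset.Icc 1 K,
            ((x k - u) ^ 2 - (x (k + 1) - u) ^ 2 + η ^ 2 * g k ^ 2) := by
          rw [Finset.mul_sum]
          refine Finset.sum_le_sum fun k hk ↦ ?_
          obtain ⟨hk₁, hkK⟩ := Finset.mem_Icc.mp hk
          rw [hupd k hk₁ hkK]
          exact projected_step_regret_le η (x k) (g k) hu
      _ = (x 1 - u) ^ 2 - (x (K + 1) - u) ^ 2 + η ^ 2 * ∑ k ∈ Finset.Icc 1 K, g k ^ 2 := by
          rw [Finset.sum_add_distrib, telescope, Finset.mul_sum]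
      _ ≤ (x 1 - u) ^ 2 + η ^ 2 * ∑ k ∈ Finset.Icc 1 K, g k ^ 2 := by
          gcongr
          exact sub_le_self _ (sq_nonneg _)
  calc ∑ k ∈ Finset.Icc 1 K, (x k - u) * g k
    _ ≤ ((x 1 - u) ^ 2 + η ^ 2 * ∑ k ∈ Finset.Icc 1 K, g k ^ 2) / (2 * η) := by
        rwa [le_div_iff₀' (by positivity)]
    _ = (x 1 - u) ^ 2 / (2 * η) + η / 2 * ∑ k ∈ Finset.Icc 1 K, g k ^ 2 := by
        field_simp

end ProjectedDescent

section Lagrangian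

variable {Θ : Type*} {F J : Θ → ℝ} {ε : ℝ}

/-- The Lagrangian of maximizing `F` subject to `J ≤ ε`, with multiplier `m`. -/
def lagrangian (F J : Θ → ℝ) (ε m : ℝ) (θ : Θ) : ℝ :=
  F θ + m * (ε - J θ)

theorem objective_gap_le_of_lagrangian_le {m : ℝ} (hm : 0 ≤ m) {θ θstar : Θ}
    (hmax : lagrangian F J ε m θstar ≤ lagrangian F J ε m θ) (hfeas : J θstar ≤ ε) :
    F θstar - F θ ≤ m * (ε - J θ) := by
  have slack_nonneg : 0 ≤ m * (ε - J θstar) := mul_nonneg hm (sub_nonneg.mpr hfeas)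
  unfold lagrangian at hmax
  linarith

variable {K : ℕ} {η G : ℝ} {μ : ℕ → ℝ} {θ : ℕ → Θ} {θstar : Θ}

theorem dual_descent_objective_gap (hK : 1 ≤ K) (hμ₁ : 0 ≤ μ 1) (hη : 0 < η)
    (hmax : ∀ k, 1 ≤ k → k ≤ K → ∀ θ' : Θ,
      lagrangian F J ε (μ k) θ' ≤ lagrangian F J ε (μ k) (θ k))
    (hslack : ∀ k, 1 ≤ k → k ≤ K → |ε - J (θ k)| ≤ G)
    (hupd : ∀ k, 1 ≤ k → k ≤ K → μ (k + 1) = max (μ k - η * (ε - J (θ k))) 0)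
    (hfeas : J θstar ≤ ε) :
    (1 / (K : ℝ)) * ∑ k ∈ Finset.Icc 1 K, (F θstar - F (θ k)) ≤
      μ 1 ^ 2 / (2 * η * K) + η * G ^ 2 / 2 := by
  have gap_le : ∑ k ∈ Finset.Icc 1 K, (F θstar - F (θ k)) ≤
      ∑ k ∈ Finset.Icc 1 K, μ k * (ε - J (θ k)) := by
    refine Finset.sum_le_sum fun k hk ↦ ?_
    obtain ⟨hk₁, hkK⟩ := Finset.mem_Icc.mp hk
    have hμ_nonneg : 0 ≤ μ k := projected_descent_nonneg hμ₁ hupd hk₁ (Nat.le_succ_of_le hkK)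
    exact objective_gap_le_of_lagrangian_le hμ_nonneg (hmax k hk₁ hkK θstar) hfeas
  have regret_le : ∑ k ∈ Finset.Icc 1 K, μ k * (ε - J (θ k)) ≤
      μ 1 ^ 2 / (2 * η) + η / 2 * ∑ k ∈ Finset.Icc 1 K, (ε - J (θ k)) ^ 2 := by
    simpa only [sub_zero] using projected_descent_regret_le hη hupd le_rfl
  have sum_sq_le : ∑ k ∈ Finset.Icc 1 K, (ε - J (θ k)) ^ 2 ≤ K * G ^ 2 := by
    have h := Finset.sum_le_card_nsmul (Finset.Icc 1 K) (fun k ↦ (ε - J (θ k)) ^ 2) (G ^ 2)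
      fun k hk ↦ sq_le_sq.mpr <|
        (hslack k (Finset.mem_Icc.mp hk).1 (Finset.mem_Icc.mp hk).2).trans (le_abs_self G)
    simpa using h
  have : (0 : ℝ) < K := by exact_mod_cast hK
  calc (1 / (K : ℝ)) * ∑ k ∈ Finset.Icc 1 K, (F θstar - F (θ k))
    _ ≤ 1 / K * (μ 1 ^ 2 / (2 * η) + η / 2 * (K * G ^ 2)) := by
        gcongr
        exact gap_le.trans (regret_le.trans (by gcongr))
    _ = μ 1 ^ 2 / (2 * η * K) + η * G ^ 2 / 2 := by
        field_simp

theorem dual_descent_objective_gap_tuned_general (hG : 0 < G) (hK : 1 ≤ K) (hμ₁ : 0 < μ 1)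
    (hη : η = μ 1 / (Real.sqrt K * G))
    (hmax : ∀ k, 1 ≤ k → k ≤ K → ∀ θ' : Θ,
      lagrangian F J ε (μ k) θ' ≤ lagrangian F J ε (μ k) (θ k))
    (hslack : ∀ k, 1 ≤ k → k ≤ K → |ε - J (θ k)| ≤ G)
    (hupd : ∀ k, 1 ≤ k → k ≤ K → μ (k + 1) = max (μ k - η * (ε - J (θ k))) 0)
    (hfeas : J θstar ≤ ε) :
    (1 / (K : ℝ)) * ∑ k ∈ Finset.Icc 1 K, (F θstar - F (θ k)) ≤ G * μ 1 / Real.sqrt K := by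
  have hKpos : (0 : ℝ) < K := by exact_mod_cast hK
  have hη_pos : 0 < η := by rw [hη]; positivity
  have balance : μ 1 ^ 2 / (2 * η * K) + η * G ^ 2 / 2 = G * μ 1 / Real.sqrt K := by
    have sq_sqrt_K : Real.sqrt K ^ 2 = K := Real.sq_sqrt hKpos.le
    rw [hη]
    field_simp
    rw [sq_sqrt_K]
    ring
  exact (dual_descent_objective_gap hK hμ₁.le hη_pos hmax hslack hupd hfeas).trans_eq balance

end Lagrangian

theorem dual_descent_objective_gap_tuned
    {Θ : Type*} [Nonempty Θ] (F J : Θ → ℝ) (ε Jbar : ℝ)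
    (hε : 0 ≤ ε) (hJbar : 0 ≤ Jbar) (hmaxpos : 0 < max ε Jbar)
    (K : ℕ) (hK : 1 ≤ K)
    (μ : ℕ → ℝ) (θ : ℕ → Θ) (hμ1 : 0 < μ 1)
    (η : ℝ) (hη : η = μ 1 / (Real.sqrt K * max ε Jbar))
    (hmax : ∀ k, 1 ≤ k → k ≤ K → ∀ θ' : Θ,
      F θ' + μ k * (ε - J θ') ≤ F (θ k) + μ k * (ε - J (θ k)))
    (hJθ : ∀ k, 1 ≤ k → k ≤ K → 0 ≤ J (θ k) ∧ J (θ k) ≤ Jbar)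
    (hupd : ∀ k, 1 ≤ k → k ≤ K → μ (k + 1) = max (μ k - η * (ε - J (θ k))) 0)
    (θstar : Θ) (hfeas : J θstar ≤ ε) :
    (1 / (K : ℝ)) * ∑ k ∈ Finset.Icc 1 K, (F θstar - F (θ k)) ≤
      (3 / 2) * max ε Jbar * μ 1 / Real.sqrt K := by
  have hslack : ∀ k, 1 ≤ k → k ≤ K → |ε - J (θ k)| ≤ max ε Jbar := fun k hk hkK ↦
    abs_sub_le_of_nonneg_of_le hε (le_max_left _ _) (hJθ k hk hkK).1
      (le_max_of_le_right (hJθ k hk hkK).2)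
  refine (dual_descent_objective_gap_tuned_general
    hmaxpos hK hμ1 hη hmax hslack hupd hfeas).trans ?_
  gcongr
  linarith
end

section
/- (Deterministic core of Theorem 2.) Let E be a real inner product space, φ : E → ℝ with φ(w') ≥ m for all w' ∈ E, β > 0, λ > 0, L ≥ 0, H ≥ 1. Let w₁, …, w_{H+1} ∈ E, g₁, …, g_H ∈ E with w_{j+1} = w_j − λg_j and ‖g_j‖ ≤ L for each j, and let ŵ_j be a proximal point of φ at w_j with parameter β. Suppose that for each j there is D_j ∈ ℝ with φ(ŵ_j) ≥ φ(w_j) − D_j + ⟨g_j, ŵ_j − w_j⟩ − (β/2)‖ŵ_j − w_j‖². Let Φ(u) = inf_{w'} (φ(w') + β‖w' − u‖²). Then (1/H)·Σ_{j=1}^{H} ‖w_j − ŵ_j‖² ≤ (Φ(w₁) − m)/(β²λH) + (2/β)·(1/H)·Σ_{j=1}^{H} D_j + λL²/β. -/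
open scoped RealInnerProductSpace

/-!
The Moreau envelope `Φ` of `φ` is a Lyapunov function for the iteration `w ↦ w - lam • g`. Testing
the infimum that defines `Φ (w - lam • g)` with the proximal point `p` of `w` gives
`Φ (w - lam • g) ≤ Φ w + 2 * β * lam * ⟪g, p - w⟫ + β * lam ^ 2 * ‖g‖ ^ 2`. The approximate
subgradient inequality, combined with the minimality of `p`, bounds `⟪g, p - w⟫` by
`D - β / 2 * ‖p - w‖ ^ 2`, so each step decreases `Φ` by `β ^ 2 * lam * ‖w - p‖ ^ 2` up to error
terms, and these decreases telescope.
-/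

section SeminormedGroup

variable {E : Type*} [SeminormedAddCommGroup E] {φ : E → ℝ} {β c : ℝ} {u p : E}

/-- The Moreau envelope of `φ` with parameter `β`, with the quadratic penalty weighted by `β` rather
than `β / 2`. It is the infimum of a set of reals, hence meaningful only when that set is bounded
below. -/
noncomputable def moreauEnvelope (φ : E → ℝ) (β : ℝ) (u : E) : ℝ :=
  ⨅ v : E, (φ v + β * ‖v - u‖ ^ 2)

/-- `p` is a proximal point of `φ` at `u` with parameter `β`: it minimizes the function whose
infimum is `moreauEnvelope φ β u`. Proximal points need not be unique. -/
def IsProxPoint (φ : E → ℝ) (β : ℝ) (u p : E) : Prop :=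
  ∀ v : E, φ p + β * ‖p - u‖ ^ 2 ≤ φ v + β * ‖v - u‖ ^ 2

lemma le_add_mul_norm_sub_sq (hβ : 0 ≤ β) (hφ : ∀ v, c ≤ φ v) (u v : E) :
    c ≤ φ v + β * ‖v - u‖ ^ 2 :=
  le_add_of_le_of_nonneg (hφ v) (by positivity)

lemma le_moreauEnvelope (hβ : 0 ≤ β) (hφ : ∀ v, c ≤ φ v) (u : E) : c ≤ moreauEnvelope φ β u :=
  le_ciInf (le_add_mul_norm_sub_sq hβ hφ u)

lemma moreauEnvelope_le (hβ : 0 ≤ β) (hφ : ∀ v, c ≤ φ v) (u v : E) :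
    moreauEnvelope φ β u ≤ φ v + β * ‖v - u‖ ^ 2 :=
  ciInf_le ⟨c, Set.forall_mem_range.2 (le_add_mul_norm_sub_sq hβ hφ u)⟩ v

lemma IsProxPoint.moreauEnvelope_eq (hp : IsProxPoint φ β u p) :
    moreauEnvelope φ β u = φ p + β * ‖p - u‖ ^ 2 :=
  le_antisymm (ciInf_le ⟨_, Set.forall_mem_range.2 hp⟩ p) (le_ciInf hp)

lemma IsProxPoint.add_mul_norm_sub_sq_le (hp : IsProxPoint φ β u p) :
    φ p + β * ‖p - u‖ ^ 2 ≤ φ u := by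
  simpa using hp u

end SeminormedGroup

section InnerProductSpace

variable {E : Type*} [SeminormedAddCommGroup E] [InnerProductSpace ℝ E] {φ : E → ℝ} {β c : ℝ}

lemma IsProxPoint.inner_le {u p g : E} {D : ℝ} (hp : IsProxPoint φ β u p)
    (hlower : φ u - D + ⟪g, p - u⟫ - β / 2 * ‖p - u‖ ^ 2 ≤ φ p) :
    ⟪g, p - u⟫ ≤ D - β / 2 * ‖p - u‖ ^ 2 := by
  linarith [hp.add_mul_norm_sub_sq_le]

lemma norm_sub_sub_smul_sq (u p g : E) (t : ℝ) :
    ‖p - (u - t • g)‖ ^ 2 = ‖p - u‖ ^ 2 + 2 * t * ⟪g, p - u⟫ + t ^ 2 * ‖g‖ ^ 2 := by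
  rw [← sub_add, norm_add_sq_real, real_inner_smul_right, real_inner_comm, norm_smul, mul_pow,
    Real.norm_eq_abs, sq_abs, mul_assoc]

lemma IsProxPoint.moreauEnvelope_sub_smul_le {u p : E} (hp : IsProxPoint φ β u p) (hβ : 0 ≤ β)
    (hφ : ∀ v, c ≤ φ v) (g : E) (t : ℝ) :
    moreauEnvelope φ β (u - t • g) ≤
      moreauEnvelope φ β u + 2 * β * t * ⟪g, p - u⟫ + β * t ^ 2 * ‖g‖ ^ 2 :=
  calc
    moreauEnvelope φ β (u - t • g) ≤ φ p + β * ‖p - (u - t • g)‖ ^ 2 :=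
      moreauEnvelope_le hβ hφ _ p
    _ = moreauEnvelope φ β u + 2 * β * t * ⟪g, p - u⟫ + β * t ^ 2 * ‖g‖ ^ 2 := by
      rw [norm_sub_sub_smul_sq, hp.moreauEnvelope_eq]
      ring

lemma IsProxPoint.mul_norm_sub_sq_le_moreauEnvelope_sub {u p g : E} {t D : ℝ}
    (hp : IsProxPoint φ β u p) (hβ : 0 ≤ β) (hφ : ∀ v, c ≤ φ v) (ht : 0 ≤ t)
    (hlower : φ u - D + ⟪g, p - u⟫ - β / 2 * ‖p - u‖ ^ 2 ≤ φ p) :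
    β ^ 2 * (t * ‖u - p‖ ^ 2) ≤
      moreauEnvelope φ β u - moreauEnvelope φ β (u - t • g) +
        2 * β * (t * D) + β * (t ^ 2 * ‖g‖ ^ 2) := by
  have hstep := hp.moreauEnvelope_sub_smul_le hβ hφ g t
  have hinner : 2 * β * t * ⟪g, p - u⟫ ≤ 2 * β * t * (D - β / 2 * ‖p - u‖ ^ 2) := by
    gcongr
    exact hp.inner_le hlower
  rw [norm_sub_rev u p]
  linarith

lemma mul_sum_norm_sub_prox_sq_le {a b : ℕ} {w g p : ℕ → E} {t D : ℕ → ℝ} (hab : a ≤ b + 1)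
    (hβ : 0 ≤ β) (hφ : ∀ v, c ≤ φ v) (ht : ∀ j ∈ Finset.Icc a b, 0 ≤ t j)
    (hw : ∀ j ∈ Finset.Icc a b, w (j + 1) = w j - t j • g j)
    (hp : ∀ j ∈ Finset.Icc a b, IsProxPoint φ β (w j) (p j))
    (hlower : ∀ j ∈ Finset.Icc a b,
      φ (w j) - D j + ⟪g j, p j - w j⟫ - β / 2 * ‖p j - w j‖ ^ 2 ≤ φ (p j)) :
    β ^ 2 * ∑ j ∈ Finset.Icc a b, t j * ‖w j - p j‖ ^ 2 ≤
      moreauEnvelope φ β (w a) - moreauEnvelope φ β (w (b + 1)) +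
        2 * β * ∑ j ∈ Finset.Icc a b, t j * D j +
        β * ∑ j ∈ Finset.Icc a b, t j ^ 2 * ‖g j‖ ^ 2 := by
  have htelescope : ∑ j ∈ Finset.Icc a b,
      (moreauEnvelope φ β (w j) - moreauEnvelope φ β (w (j + 1))) =
        moreauEnvelope φ β (w a) - moreauEnvelope φ β (w (b + 1)) := by
    simpa only [neg_sub_neg, Finset.Ico_add_one_right_eq_Icc] using
      Finset.sum_Ico_sub (fun j => -moreauEnvelope φ β (w j)) hab
  rw [← htelescope, Finset.mul_sum, Finset.mul_sum, Finset.mul_sum, ← Finset.sum_add_distrib,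
    ← Finset.sum_add_distrib]
  refine Finset.sum_le_sum fun j hj => ?_
  rw [hw j hj]
  exact (hp j hj).mul_norm_sub_sq_le_moreauEnvelope_sub hβ hφ (ht j hj) (hlower j hj)

lemma mul_sum_norm_sub_prox_sq_le_of_norm_le {H : ℕ} {w g p : ℕ → E} {t L : ℝ} {D : ℕ → ℝ}
    (hβ : 0 ≤ β) (hφ : ∀ v, c ≤ φ v) (ht : 0 ≤ t)
    (hw : ∀ j ∈ Finset.Icc 1 H, w (j + 1) = w j - t • g j)
    (hg : ∀ j ∈ Finset.Icc 1 H, ‖g j‖ ≤ L)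
    (hp : ∀ j ∈ Finset.Icc 1 H, IsProxPoint φ β (w j) (p j))
    (hlower : ∀ j ∈ Finset.Icc 1 H,
      φ (w j) - D j + ⟪g j, p j - w j⟫ - β / 2 * ‖p j - w j‖ ^ 2 ≤ φ (p j)) :
    β ^ 2 * t * ∑ j ∈ Finset.Icc 1 H, ‖w j - p j‖ ^ 2 ≤
      moreauEnvelope φ β (w 1) - c + 2 * β * t * ∑ j ∈ Finset.Icc 1 H, D j +
        β * t ^ 2 * (H * L ^ 2) := by
  have hsum := mul_sum_norm_sub_prox_sq_le (Nat.le_add_left 1 H) hβ hφ (fun _ _ => ht) hw hp hlower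
  have hgrad : ∑ j ∈ Finset.Icc 1 H, ‖g j‖ ^ 2 ≤ H * L ^ 2 := by
    simpa using Finset.sum_le_card_nsmul (Finset.Icc 1 H) (fun j => ‖g j‖ ^ 2) (L ^ 2)
      fun j hj => pow_le_pow_left₀ (norm_nonneg _) (hg j hj) 2
  simp only [← Finset.mul_sum, ← mul_assoc] at hsum
  refine hsum.trans ?_
  gcongr
  exact le_moreauEnvelope hβ hφ _

theorem minmax_deterministic_core_general {H : ℕ} {w g p : ℕ → E} {t L : ℝ} {D : ℕ → ℝ}
    (hH : 1 ≤ H) (hβ : 0 < β) (hφ : ∀ v, c ≤ φ v) (ht : 0 < t)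
    (hw : ∀ j ∈ Finset.Icc 1 H, w (j + 1) = w j - t • g j)
    (hg : ∀ j ∈ Finset.Icc 1 H, ‖g j‖ ≤ L)
    (hp : ∀ j ∈ Finset.Icc 1 H, IsProxPoint φ β (w j) (p j))
    (hlower : ∀ j ∈ Finset.Icc 1 H,
      φ (w j) - D j + ⟪g j, p j - w j⟫ - β / 2 * ‖p j - w j‖ ^ 2 ≤ φ (p j)) :
    1 / (H : ℝ) * ∑ j ∈ Finset.Icc 1 H, ‖w j - p j‖ ^ 2 ≤
      (moreauEnvelope φ β (w 1) - c) / (β ^ 2 * t * H) +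
        2 / β * (1 / (H : ℝ) * ∑ j ∈ Finset.Icc 1 H, D j) + t * L ^ 2 / β := by
  have : (0 : ℝ) < H := by exact_mod_cast hH
  calc
    1 / (H : ℝ) * ∑ j ∈ Finset.Icc 1 H, ‖w j - p j‖ ^ 2
      = (β ^ 2 * t * ∑ j ∈ Finset.Icc 1 H, ‖w j - p j‖ ^ 2) / (β ^ 2 * t * H) := by
        field_simp
    _ ≤ (moreauEnvelope φ β (w 1) - c + 2 * β * t * ∑ j ∈ Finset.Icc 1 H, D j +
          β * t ^ 2 * (H * L ^ 2)) / (β ^ 2 * t * H) := by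
        gcongr
        exact mul_sum_norm_sub_prox_sq_le_of_norm_le hβ.le hφ ht.le hw hg hp hlower
    _ = _ := by
        field_simp

end InnerProductSpace

theorem minmax_deterministic_core
    {E : Type*} [NormedAddCommGroup E] [InnerProductSpace ℝ E]
    (φ : E → ℝ) (m : ℝ) (hbdd : ∀ w' : E, m ≤ φ w')
    (β lam L : ℝ) (hβ : 0 < β) (hlam : 0 < lam) (hL : 0 ≤ L)
    (H : ℕ) (hH : 1 ≤ H)
    (w : ℕ → E) (g : ℕ → E)
    (hupd : ∀ j, 1 ≤ j → j ≤ H → w (j + 1) = w j - lam • g j)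
    (hg : ∀ j, 1 ≤ j → j ≤ H → ‖g j‖ ≤ L)
    (what : ℕ → E)
    (hprox : ∀ j, 1 ≤ j → j ≤ H →
      ∀ w' : E, φ (what j) + β * ‖what j - w j‖ ^ 2 ≤ φ w' + β * ‖w' - w j‖ ^ 2)
    (D : ℕ → ℝ)
    (hlower : ∀ j, 1 ≤ j → j ≤ H →
      φ (w j) - D j + ⟪g j, what j - w j⟫ - (β / 2) * ‖what j - w j‖ ^ 2 ≤ φ (what j))
    (Φ : E → ℝ) (hΦ : ∀ u : E, Φ u = ⨅ w' : E, (φ w' + β * ‖w' - u‖ ^ 2)) :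
    (1 / (H : ℝ)) * ∑ j ∈ Finset.Icc 1 H, ‖w j - what j‖ ^ 2 ≤
      (Φ (w 1) - m) / (β ^ 2 * lam * H)
        + (2 / β) * ((1 / (H : ℝ)) * ∑ j ∈ Finset.Icc 1 H, D j)
        + lam * L ^ 2 / β := by
  obtain rfl : Φ = moreauEnvelope φ β := funext hΦ
  simp only [← and_imp, ← Finset.mem_Icc] at hupd hg hprox hlower
  exact minmax_deterministic_core_general hH hβ hbdd hlam hupd hg hprox hlower
end
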